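/- Let K ≥ 1 be a natural number and ℓ : Fin K → ℝ a logit vector. Define the logit-distance vector d : Fin K → ℝ by d_k = (max_j ℓ_j) − ℓ_k, and let u be the uniform distribution u_i = 1/K. Then the mean logit distance is bounded above and below by the KL divergence from u to softmax(ℓ), up to the additive constant log K: KL(u‖softmax(ℓ)) ≤ (1/K)·Σ_{k=1}^{K} d_k ≤ KL(u‖softmax(ℓ)) + log K. -/

import Mathlib

open Real Finset

/-!
Write `M` for the largest of the `n` logits and `L = log ∑ j, exp (ℓ j)`. The bounds already hold
for each index separately: the logit distance is `M - ℓ k`, while the log-ratio of the uniform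
distribution to the softmax is `L - log n - ℓ k`, and `M ≤ L ≤ M + log n` because `exp M` is one
of the `n` summands of `exp L` and dominates each of them.
-/

section Softmax

variable {ι : Type*} {s : Finset ι}

/-- The softmax distribution on the finite set `s` with logits `ℓ`. The normalization runs over
`s` only, so the value at an index outside `s` has no probabilistic meaning. -/
noncomputable def softmax (s : Finset ι) (ℓ : ι → ℝ) (i : ι) : ℝ :=
  exp (ℓ i) / ∑ j ∈ s, exp (ℓ j)

/-- The logit-distance vector `d` of the paper: the gap between the largest logit on `s` and the
logit of `k`. It is a genuine (nonnegative) distance only for `k ∈ s`. -/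
noncomputable def logitDistance (hs : s.Nonempty) (ℓ : ι → ℝ) (k : ι) : ℝ :=
  s.sup' hs ℓ - ℓ k

/-- The Kullback–Leibler divergence `KL(u‖p)` from the uniform distribution `u` on `s` to `p`,
as a real number; this is the intended quantity only for `p` positive on `s`. -/
noncomputable def uniformKL (s : Finset ι) (p : ι → ℝ) : ℝ :=
  ∑ i ∈ s, 1 / (#s : ℝ) * log (1 / (#s : ℝ) / p i)

theorem sum_exp_pos (hs : s.Nonempty) (ℓ : ι → ℝ) : 0 < ∑ j ∈ s, exp (ℓ j) :=
  sum_pos (fun j _ => exp_pos (ℓ j)) hs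

theorem sup'_le_log_sum_exp (hs : s.Nonempty) (ℓ : ι → ℝ) :
    s.sup' hs ℓ ≤ log (∑ j ∈ s, exp (ℓ j)) := by
  refine sup'_le hs ℓ fun i hi => (le_log_iff_exp_le (sum_exp_pos hs ℓ)).2 ?_
  exact single_le_sum (f := fun j => exp (ℓ j)) (fun j _ => (exp_pos (ℓ j)).le) hi

theorem log_sum_exp_le_sup'_add_log_card (hs : s.Nonempty) (ℓ : ι → ℝ) :
    log (∑ j ∈ s, exp (ℓ j)) ≤ s.sup' hs ℓ + log #s := by
  have card_pos : (0 : ℝ) < #s := by exact_mod_cast hs.card_pos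
  rw [log_le_iff_le_exp (sum_exp_pos hs ℓ)]
  calc ∑ j ∈ s, exp (ℓ j)
      ≤ #s • exp (s.sup' hs ℓ) :=
        sum_le_card_nsmul s _ _ fun j hj => exp_le_exp.2 (le_sup' ℓ hj)
    _ = exp (s.sup' hs ℓ + log #s) := by
        rw [nsmul_eq_mul, exp_add, exp_log card_pos, mul_comm]

theorem softmax_pos (hs : s.Nonempty) (ℓ : ι → ℝ) (i : ι) : 0 < softmax s ℓ i :=
  div_pos (exp_pos _) (sum_exp_pos hs ℓ)

theorem log_softmax (hs : s.Nonempty) (ℓ : ι → ℝ) (i : ι) :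
    log (softmax s ℓ i) = ℓ i - log (∑ j ∈ s, exp (ℓ j)) := by
  rw [softmax, log_div (exp_ne_zero _) (sum_exp_pos hs ℓ).ne', log_exp]

theorem log_inv_card_div_softmax (hs : s.Nonempty) (ℓ : ι → ℝ) (i : ι) :
    log (1 / #s / softmax s ℓ i) = log (∑ j ∈ s, exp (ℓ j)) - log #s - ℓ i := by
  have card_ne_zero : (#s : ℝ) ≠ 0 := by exact_mod_cast hs.card_ne_zero
  rw [log_div (one_div_ne_zero card_ne_zero) (softmax_pos hs ℓ i).ne', log_softmax hs, one_div,
    log_inv]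
  ring

theorem log_inv_card_div_softmax_le_logitDistance (hs : s.Nonempty) (ℓ : ι → ℝ) (i : ι) :
    log (1 / #s / softmax s ℓ i) ≤ logitDistance hs ℓ i := by
  rw [log_inv_card_div_softmax hs, logitDistance]
  linarith [log_sum_exp_le_sup'_add_log_card hs ℓ]

theorem logitDistance_le_log_inv_card_div_softmax_add_log_card (hs : s.Nonempty) (ℓ : ι → ℝ)
    (i : ι) : logitDistance hs ℓ i ≤ log (1 / #s / softmax s ℓ i) + log #s := by
  rw [log_inv_card_div_softmax hs, logitDistance]
  linarith [sup'_le_log_sum_exp hs ℓ]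

theorem mean_logit_distance_bounds_general (hs : s.Nonempty) (ℓ : ι → ℝ) :
    uniformKL s (softmax s ℓ) ≤ 1 / (#s : ℝ) * ∑ k ∈ s, logitDistance hs ℓ k ∧
    1 / (#s : ℝ) * ∑ k ∈ s, logitDistance hs ℓ k ≤ uniformKL s (softmax s ℓ) + log #s := by
  have card_ne_zero : (#s : ℝ) ≠ 0 := by exact_mod_cast hs.card_ne_zero
  rw [uniformKL, ← mul_sum]
  constructor
  · gcongr with k
    exact log_inv_card_div_softmax_le_logitDistance hs ℓ k
  · calc 1 / (#s : ℝ) * ∑ k ∈ s, logitDistance hs ℓ k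
        ≤ 1 / (#s : ℝ) * ∑ k ∈ s, (log (1 / #s / softmax s ℓ k) + log #s) := by
          gcongr with k
          exact logitDistance_le_log_inv_card_div_softmax_add_log_card hs ℓ k
      _ = 1 / (#s : ℝ) * ∑ k ∈ s, log (1 / #s / softmax s ℓ k) + log #s := by
          rw [sum_add_distrib, sum_const, nsmul_eq_mul, mul_add, ← mul_assoc,
            one_div_mul_cancel card_ne_zero, one_mul]

end Softmax

/-- Proposition 3.2: the mean logit distance is bounded above and below by the
KL divergence from the uniform distribution to `softmax ℓ`, up to `log K`. -/
theorem mean_logit_distance_bounds (K : ℕ) (hK : 1 ≤ K) (ℓ : Fin K → ℝ) :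
    (∑ i, (1 / (K : ℝ)) * Real.log ((1 / (K : ℝ)) /
        (Real.exp (ℓ i) / ∑ j, Real.exp (ℓ j)))) ≤
      (1 / (K : ℝ)) * ∑ k,
        ((Finset.univ.sup' (Finset.univ_nonempty_iff.mpr (Fin.pos_iff_nonempty.mp hK)) ℓ) - ℓ k) ∧
    (1 / (K : ℝ)) * ∑ k,
        ((Finset.univ.sup' (Finset.univ_nonempty_iff.mpr (Fin.pos_iff_nonempty.mp hK)) ℓ) - ℓ k) ≤
      (∑ i, (1 / (K : ℝ)) * Real.log ((1 / (K : ℝ)) /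
        (Real.exp (ℓ i) / ∑ j, Real.exp (ℓ j)))) + Real.log K := by
  simpa only [uniformKL, softmax, logitDistance, card_univ, Fintype.card_fin] using
    mean_logit_distance_bounds_general (univ_nonempty_iff.mpr (Fin.pos_iff_nonempty.mp hK)) ℓ
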